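/- Fix z ∈ ℂ. If v = (v₊, v₋, v₀) : ℝ → ℂ³ is a solution of the pseudo Jahn–Teller system −i v'(s) = V_PJT(s,z) v(s), then the function w : ℝ → ℂ³ defined by w(s) = (v₊(−s), v₋(−s), −v₀(−s)) is also a solution of the same system. -/

import Mathlib

open Matrix

/-- The pseudo Jahn–Teller matrix `V_PJT(s,z)`: the 3×3 Hermitian complex matrix with rows
`(s, 0, z/√2)`, `(0, −s, conj(z)/√2)`, `(conj(z)/√2, z/√2, 0)`. -/
noncomputable def VPJT (s : ℝ) (z : ℂ) : Matrix (Fin 3) (Fin 3) ℂ :=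
  !![(s : ℂ), 0, z / (Real.sqrt 2 : ℂ);
     0, -(s : ℂ), (starRingEnd ℂ) z / (Real.sqrt 2 : ℂ);
     (starRingEnd ℂ) z / (Real.sqrt 2 : ℂ), z / (Real.sqrt 2 : ℂ), 0]

/-!
With `S = diag(1, 1, -1)`, reversing `s` flips the sign of the diagonal of `V_PJT`, while
conjugating by `S` flips the sign of its off-diagonal entries; hence
`S V_PJT(-s,z) = -V_PJT(s,z) S`. This minus sign cancels the one that the chain rule produces for
`s ↦ S v(-s)`, so that curve is again a solution.
-/

section IntegralCurve

variable {E F : Type*} [NormedAddCommGroup E] [NormedSpace ℝ E]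
  [NormedAddCommGroup F] [NormedSpace ℝ F] {γ : ℝ → E} {v : ℝ → E → E} {w : ℝ → F → F}

theorem isIntegralCurve_comp_neg (hγ : IsIntegralCurve γ v) :
    IsIntegralCurve (fun t => γ (-t)) fun t x => -v (-t) x := by
  simpa [Function.comp_def] using! hγ.comp_mul (-1)

theorem isIntegralCurve_clm_comp (hγ : IsIntegralCurve γ v) (L : E →L[ℝ] F)
    (hL : ∀ t x, L (v t x) = w t (L x)) : IsIntegralCurve (fun t => L (γ t)) w := fun t =>
  (L.hasFDerivAt.comp_hasDerivAt t (hγ t)).congr_deriv (hL t (γ t))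

end IntegralCurve

theorem isIntegralCurve_mulVec_comp_neg {R m n : Type*} [NormedCommRing R] [NormedAlgebra ℝ R]
    [Fintype m] [Fintype n] {A : ℝ → Matrix n n R} {B : ℝ → Matrix m m R} {S : Matrix m n R}
    (hS : ∀ t, S * A (-t) = -(B t * S)) {γ : ℝ → n → R}
    (hγ : IsIntegralCurve γ fun t x => A t *ᵥ x) :
    IsIntegralCurve (fun t => S *ᵥ γ (-t)) fun t x => B t *ᵥ x := by
  let L : (n → R) →L[ℝ] (m → R) :=
    ⟨S.mulVecLin.restrictScalars ℝ, continuous_const.matrix_mulVec continuous_id⟩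
  refine isIntegralCurve_clm_comp (isIntegralCurve_comp_neg hγ) L fun t x => ?_
  change S *ᵥ -(A (-t) *ᵥ x) = B t *ᵥ (S *ᵥ x)
  rw [mulVec_neg, mulVec_mulVec, hS, neg_mulVec, neg_neg, mulVec_mulVec]

/-- The sign change `(v₊, v₋, v₀) ↦ (v₊, v₋, -v₀)` on the state space of the pseudo Jahn–Teller
system, as a matrix; it is the symmetry that accompanies the reversal `s ↦ -s`. -/
def signPJT : Matrix (Fin 3) (Fin 3) ℂ :=
  diagonal ![1, 1, -1]

theorem signPJT_mulVec (x : Fin 3 → ℂ) : signPJT *ᵥ x = ![x 0, x 1, -x 2] := by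
  ext i
  fin_cases i <;> simp [signPJT, mulVec_diagonal]

theorem signPJT_mul_VPJT_neg (s : ℝ) (z : ℂ) : signPJT * VPJT (-s) z = -(VPJT s z * signPJT) := by
  ext i j
  fin_cases i <;> fin_cases j <;> simp [signPJT, VPJT, vecMul_diagonal]

/-- If `v = (v₊, v₋, v₀)` solves `−i v' = V_PJT(s,z) v`, then
`w(s) = (v₊(−s), v₋(−s), −v₀(−s))` solves the same system. -/
theorem VPJT_solution_reflection (z : ℂ) (v : ℝ → Fin 3 → ℂ)
    (hv : ∀ s : ℝ, HasDerivAt v (Complex.I • (VPJT s z).mulVec (v s)) s) :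
    ∀ s : ℝ, HasDerivAt (fun s : ℝ => ![v (-s) 0, v (-s) 1, -v (-s) 2])
      (Complex.I • (VPJT s z).mulVec ![v (-s) 0, v (-s) 1, -v (-s) 2]) s := by
  have hS (s : ℝ) :
      signPJT * (Complex.I • VPJT (-s) z) = -((Complex.I • VPJT s z) * signPJT) := by
    rw [Matrix.mul_smul, signPJT_mul_VPJT_neg, smul_neg, Matrix.smul_mul]
  have hv' : IsIntegralCurve v fun s x => (Complex.I • VPJT s z) *ᵥ x := fun s => by
    simpa only [smul_mulVec] using hv s
  intro s
  simpa only [signPJT_mulVec, smul_mulVec] using isIntegralCurve_mulVec_comp_neg hS hv' s
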